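/- Fix an integer d ≥ 1, p ∈ (1,∞), a penalty function φ, and let (μ_t)_{t≥0} be a convolution semigroup in 𝒫_p(ℝ^d) with 𝒲_p(μ_t, δ_0) → 0 as t ↓ 0. Then for every f ∈ C₀(ℝ^d), lim_{t↓0} ‖𝒮(t)f − f‖_∞ = 0. -/

import Mathlib

open MeasureTheory Filter Topology ENNReal NNReal Set ZeroAtInfty
noncomputable section

/-- Euclidean space ℝ^d. -/
abbrev Ed (d : ℕ) := EuclideanSpace ℝ (Fin d)

/-- `𝒫_p(ℝ^d)`: Borel probability measures with finite `p`-th moment. -/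
def MemPp {d : ℕ} (p : ℝ) (μ : Measure (Ed d)) : Prop :=
  IsProbabilityMeasure μ ∧ ∫⁻ x, (‖x‖₊ : ℝ≥0∞) ^ p ∂μ < ∞

/-- `γ` is a coupling of `μ` and `ν`. -/
def IsCoupling {d : ℕ} (γ : Measure (Ed d × Ed d)) (μ ν : Measure (Ed d)) : Prop :=
  γ.map Prod.fst = μ ∧ γ.map Prod.snd = ν

/-- The `p`-Wasserstein distance `𝒲_p(μ, ν)`. -/
def Wp {d : ℕ} (p : ℝ) (μ ν : Measure (Ed d)) : ℝ :=
  (⨅ γ ∈ {γ : Measure (Ed d × Ed d) | IsCoupling γ μ ν},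
    (∫⁻ q, (‖q.2 - q.1‖₊ : ℝ≥0∞) ^ p ∂γ) ^ (1 / p)).toReal

/-- The scaled penalty `φ_t(r) = t·φ(r/t)` for `t > 0`; `φ_0(0) = 0`, `φ_0(r) = ∞` for `r > 0`. -/
def phit (φ : ℝ≥0 → ℝ≥0∞) (t : ℝ) (r : ℝ≥0) : ℝ≥0∞ :=
  if 0 < t then (t.toNNReal : ℝ≥0∞) * φ (r / t.toNNReal) else (if r = 0 then 0 else ∞)

/-- `φ` is a penalty function: lower semicontinuous, convex, increasing, not constant,
`φ(0) = 0`, and `x ↦ φ(x^{1/p})` is convex. -/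
structure IsPenalty (p : ℝ) (φ : ℝ≥0 → ℝ≥0∞) : Prop where
  lsc : LowerSemicontinuous φ
  convex : ∀ a b l m : ℝ≥0, l + m = 1 →
    φ (l * a + m * b) ≤ (l : ℝ≥0∞) * φ a + (m : ℝ≥0∞) * φ b
  mono : Monotone φ
  not_const : ∃ a b, φ a ≠ φ b
  map_zero : φ 0 = 0
  convex_rpow : ∀ a b l m : ℝ≥0, l + m = 1 →
    φ ((l * a + m * b) ^ (1 / p)) ≤ (l : ℝ≥0∞) * φ (a ^ (1 / p)) + (m : ℝ≥0∞) * φ (b ^ (1 / p))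

/-- The convex conjugate `φ*(y) = sup_{x ≥ 0} (xy − φ(x))`. -/
def phiStar (φ : ℝ≥0 → ℝ≥0∞) (y : ℝ≥0) : ℝ≥0∞ :=
  ⨆ x : ℝ≥0, ((x * y : ℝ≥0) : ℝ≥0∞) - φ x

/-- The one-step operator `S(t)f(x) = sup_ν ( ∫ f(x+y) ν(dy) − φ_t(𝒲_p(μ_t, ν)) )`. -/
def Sop {d : ℕ} (p : ℝ) (φ : ℝ≥0 → ℝ≥0∞) (μt : Measure (Ed d)) (t : ℝ)
    (f : Ed d → ℝ) (x : Ed d) : ℝ :=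
  sSup { r : ℝ | ∃ ν : Measure (Ed d), MemPp p ν ∧ ∃ c : ℝ, 0 ≤ c ∧
    phit φ t (Wp p μt ν).toNNReal ≤ ENNReal.ofReal c ∧ r = (∫ y, f (x + y) ∂ν) - c }

/-- The iterated operator `𝒮ⁿ(t) = S(2⁻ⁿ)^{∘ k} ∘ S(t − k·2⁻ⁿ)`, `k = ⌊2ⁿ t⌋`. -/
def SiterN {d : ℕ} (p : ℝ) (φ : ℝ≥0 → ℝ≥0∞) (μ : ℝ → Measure (Ed d)) (n : ℕ) (t : ℝ)
    (f : Ed d → ℝ) : Ed d → ℝ :=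
  (fun g => Sop p φ (μ ((2 : ℝ) ^ n)⁻¹) ((2 : ℝ) ^ n)⁻¹ g)^[⌊(2:ℝ)^n * t⌋₊]
    (Sop p φ (μ (t - ⌊(2:ℝ)^n * t⌋₊ * ((2:ℝ)^n)⁻¹)) (t - ⌊(2:ℝ)^n * t⌋₊ * ((2:ℝ)^n)⁻¹) f)

/-- The limiting operator `𝒮(t)f = lim_n 𝒮ⁿ(t)f` (a decreasing limit, i.e. an infimum). -/
def Slim {d : ℕ} (p : ℝ) (φ : ℝ≥0 → ℝ≥0∞) (μ : ℝ → Measure (Ed d)) (t : ℝ)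
    (f : Ed d → ℝ) (x : Ed d) : ℝ :=
  ⨅ n : ℕ, SiterN p φ μ n t f x

/-- `f ∈ C₀(ℝ^d)`: continuous and vanishing at infinity. -/
def IsC0 {d : ℕ} (f : Ed d → ℝ) : Prop :=
  Continuous f ∧ Tendsto f (cocompact (Ed d)) (𝓝 0)

/-- `(μ_t)_{t ≥ 0}` is a convolution semigroup in `𝒫_p(ℝ^d)`. -/
def IsConvSemigroup {d : ℕ} (p : ℝ) (μ : ℝ → Measure (Ed d)) : Prop :=
  μ 0 = Measure.dirac 0 ∧ (∀ s t : ℝ, 0 ≤ s → 0 ≤ t → μ (s + t) = (μ s).conv (μ t)) ∧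
    ∀ t : ℝ, 0 ≤ t → MemPp p (μ t)

/-- `𝒲_p(μ_t, δ_0) → 0` as `t ↓ 0`. -/
def WContinuousAtZero {d : ℕ} (p : ℝ) (μ : ℝ → Measure (Ed d)) : Prop :=
  Tendsto (fun t => Wp p (μ t) (Measure.dirac 0)) (𝓝[>] (0:ℝ)) (𝓝 0)

/-- The semigroup of the underlying Lévy process, `S^μ(t)f(x) = ∫ f(x+y) μ_t(dy)`. -/
def Smu {d : ℕ} (μ : ℝ → Measure (Ed d)) (t : ℝ) (f : Ed d → ℝ) (x : Ed d) : ℝ :=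
  ∫ y, f (x + y) ∂(μ t)

/-- `f ∈ D(A^μ)` with `A^μ f = Af`: `(S^μ(t)f − f)/t → Af` uniformly as `t ↓ 0`. -/
def HasGenerator {d : ℕ} (μ : ℝ → Measure (Ed d)) (f Af : Ed d → ℝ) : Prop :=
  TendstoUniformly (fun t x => (Smu μ t f x - f x) / t) Af (𝓝[>] (0:ℝ))

/-- `f ∈ C₀¹(ℝ^d)`: continuously differentiable, vanishing at infinity, with gradient
vanishing at infinity. -/
def IsC01 {d : ℕ} (f : Ed d → ℝ) : Prop :=
  IsC0 f ∧ ContDiff ℝ 1 f ∧ Tendsto (fun x => gradient f x) (cocompact (Ed d)) (𝓝 0)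



/-- bounded and uniformly continuous functions -/
def UCB {d : ℕ} (g : Ed d → ℝ) : Prop := (∃ C : ℝ, ∀ x, |g x| ≤ C) ∧ UniformContinuous g

theorem coupling_bound {d : ℕ} {p : ℝ} (hp : 1 < p) {μ ν : Measure (Ed d)}
    (hμ : MemPp p μ) {γ : Measure (Ed d × Ed d)} (hγ : IsCoupling γ μ ν) :
    ∫⁻ y, (‖y‖₊ : ℝ≥0∞) ∂ν ≤
        (∫⁻ q, (‖q.2 - q.1‖₊ : ℝ≥0∞) ^ p ∂γ) ^ (1 / p) + ∫⁻ y, (‖y‖₊ : ℝ≥0∞) ∂μ ∧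
    ∫⁻ y, (‖y‖₊ : ℝ≥0∞) ∂μ ≤
        (∫⁻ q, (‖q.2 - q.1‖₊ : ℝ≥0∞) ^ p ∂γ) ^ (1 / p) + ∫⁻ y, (‖y‖₊ : ℝ≥0∞) ∂ν := by
  obtain ⟨h1, h2⟩ := hγ
  have := hμ.1
  have : IsProbabilityMeasure γ := by
    constructor
    have : (γ.map Prod.fst) univ = 1 := by rw [h1]; exact measure_univ
    rwa [Measure.map_apply measurable_fst MeasurableSet.univ] at this
  have e2 : ∫⁻ y, (‖y‖₊ : ℝ≥0∞) ∂ν = ∫⁻ q, (‖q.2‖₊ : ℝ≥0∞) ∂γ := by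
    rw [← h2, lintegral_map (by fun_prop) measurable_snd]
  have e1 : ∫⁻ y, (‖y‖₊ : ℝ≥0∞) ∂μ = ∫⁻ q, (‖q.1‖₊ : ℝ≥0∞) ∂γ := by
    rw [← h1, lintegral_map (by fun_prop) measurable_fst]
  have hJ : ∫⁻ q, (‖q.2 - q.1‖₊ : ℝ≥0∞) ∂γ ≤
      (∫⁻ q, (‖q.2 - q.1‖₊ : ℝ≥0∞) ^ p ∂γ) ^ (1 / p) := by
    have := eLpNorm'_le_eLpNorm'_of_exponent_le
      (f := fun q : Ed d × Ed d => q.2 - q.1) one_pos hp.le γ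
      (by fun_prop)
    simpa [eLpNorm', enorm_eq_nnnorm] using this
  rw [e1, e2]
  constructor
  · calc ∫⁻ q, (‖q.2‖₊ : ℝ≥0∞) ∂γ
        ≤ ∫⁻ q, ((‖q.2 - q.1‖₊ : ℝ≥0∞) + (‖q.1‖₊ : ℝ≥0∞)) ∂γ := by
          apply lintegral_mono
          intro q
          beta_reduce
          have := nnnorm_add_le (q.2 - q.1) q.1
          rw [sub_add_cancel] at this
          exact_mod_cast this
      _ = _ := lintegral_add_right _ (by fun_prop)
      _ ≤ _ := by gcongr
  · calc ∫⁻ q, (‖q.1‖₊ : ℝ≥0∞) ∂γ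
        ≤ ∫⁻ q, ((‖q.2 - q.1‖₊ : ℝ≥0∞) + (‖q.2‖₊ : ℝ≥0∞)) ∂γ := by
          apply lintegral_mono
          intro q
          beta_reduce
          have := nnnorm_sub_le q.2 (q.2 - q.1)
          rw [_root_.sub_sub_cancel, add_comm] at this
          exact_mod_cast this
      _ = _ := lintegral_add_right _ (by fun_prop)
      _ ≤ _ := by gcongr

theorem moment_one {d : ℕ} {p : ℝ} (hp : 1 < p) {μ : Measure (Ed d)} (hμ : MemPp p μ) :
    ∫⁻ y, (‖y‖₊ : ℝ≥0∞) ∂μ < ∞ := by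
  have := hμ.1
  have := eLpNorm'_le_eLpNorm'_of_exponent_le
      (f := fun q : Ed d => q) one_pos hp.le μ (by fun_prop)
  simp only [eLpNorm', enorm_eq_nnnorm, ENNReal.rpow_one, div_one] at this
  refine this.trans_lt ?_
  exact ENNReal.rpow_lt_top_of_nonneg (by positivity) hμ.2.ne

theorem inf_lt_top {d : ℕ} {p : ℝ} (hp : 1 < p) {μ ν : Measure (Ed d)}
    (hμ : MemPp p μ) (hν : MemPp p ν) :
    (⨅ γ ∈ {γ : Measure (Ed d × Ed d) | IsCoupling γ μ ν},
    (∫⁻ q, (‖q.2 - q.1‖₊ : ℝ≥0∞) ^ p ∂γ) ^ (1 / p)) < ∞ := by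
  have := hμ.1
  have := hν.1
  have hc : IsCoupling (μ.prod ν) μ ν := by
    constructor
    · simp [Measure.map_fst_prod]
    · simp [Measure.map_snd_prod]
  refine (iInf₂_le (μ.prod ν) hc).trans_lt ?_
  apply ENNReal.rpow_lt_top_of_nonneg (by positivity)
  apply ne_of_lt
  calc ∫⁻ q, (‖q.2 - q.1‖₊ : ℝ≥0∞) ^ p ∂(μ.prod ν)
      ≤ ∫⁻ q, (2:ℝ≥0∞) ^ (p - 1) * ((‖q.2‖₊ : ℝ≥0∞) ^ p + (‖q.1‖₊ : ℝ≥0∞) ^ p) ∂(μ.prod ν) := by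
        apply lintegral_mono
        intro q
        refine le_trans ?_ (ENNReal.rpow_add_le_mul_rpow_add_rpow _ _ hp.le)
        apply ENNReal.rpow_le_rpow _ (by positivity)
        exact_mod_cast nnnorm_sub_le q.2 q.1
    _ = (2:ℝ≥0∞) ^ (p - 1) * ((∫⁻ y, (‖y‖₊ : ℝ≥0∞) ^ p ∂ν) + ∫⁻ y, (‖y‖₊ : ℝ≥0∞) ^ p ∂μ) := by
        rw [lintegral_const_mul _ (by fun_prop), lintegral_add_right _ (by fun_prop)]
        congr 2
        · conv_rhs => rw [← hc.2, lintegral_map (by fun_prop) measurable_snd]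
        · conv_rhs => rw [← hc.1, lintegral_map (by fun_prop) measurable_fst]
    _ < ∞ := by
        apply ENNReal.mul_lt_top
        · exact ENNReal.rpow_lt_top_of_nonneg (by linarith) (by simp)
        · exact ENNReal.add_lt_top.2 ⟨hν.2, hμ.2⟩

theorem norm_integrable {d : ℕ} {p : ℝ} (hp : 1 < p) {μ : Measure (Ed d)} (hμ : MemPp p μ) :
    Integrable (fun y => ‖y‖) μ := by
  refine Integrable.norm ⟨by fun_prop, ?_⟩
  have := moment_one hp hμ
  simpa [HasFiniteIntegral, enorm_eq_nnnorm] using this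

theorem moment_eq {d : ℕ} (μ : Measure (Ed d)) :
    ∫ y, ‖y‖ ∂μ = (∫⁻ y, (‖y‖₊ : ℝ≥0∞) ∂μ).toReal := by
  rw [integral_norm_eq_lintegral_enorm (by fun_prop)]
  simp [enorm_eq_nnnorm]

theorem Wp_bound {d : ℕ} {p : ℝ} (hp : 1 < p) {μ ν : Measure (Ed d)}
    (hμ : MemPp p μ) (hν : MemPp p ν) :
    ∫ y, ‖y‖ ∂ν ≤ Wp p μ ν + ∫ y, ‖y‖ ∂μ ∧ ∫ y, ‖y‖ ∂μ ≤ Wp p μ ν + ∫ y, ‖y‖ ∂ν := by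
  have h := inf_lt_top hp hμ hν
  have a := moment_one hp hμ
  have b := moment_one hp hν
  rw [moment_eq, moment_eq, Wp, ← ENNReal.toReal_add h.ne a.ne, ← ENNReal.toReal_add h.ne b.ne]
  constructor
  · apply ENNReal.toReal_mono (ENNReal.add_lt_top.2 ⟨h, a⟩).ne
    rw [← tsub_le_iff_right]
    refine le_iInf₂ fun γ hγ => ?_
    rw [tsub_le_iff_right]
    exact (coupling_bound hp hμ hγ).1
  · apply ENNReal.toReal_mono (ENNReal.add_lt_top.2 ⟨h, b⟩).ne
    rw [← tsub_le_iff_right]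
    refine le_iInf₂ fun γ hγ => ?_
    rw [tsub_le_iff_right]
    exact (coupling_bound hp hμ hγ).2

theorem Wp_self {d : ℕ} {p : ℝ} (hp : 1 < p) (μ : Measure (Ed d)) : Wp p μ μ = 0 := by
  have hc : IsCoupling (μ.map fun x => (x, x)) μ μ := by
    constructor
    · rw [Measure.map_map measurable_fst (by fun_prop)]
      exact Measure.map_id
    · rw [Measure.map_map measurable_snd (by fun_prop)]
      exact Measure.map_id
  have : (⨅ γ ∈ {γ : Measure (Ed d × Ed d) | IsCoupling γ μ μ},
    (∫⁻ q, (‖q.2 - q.1‖₊ : ℝ≥0∞) ^ p ∂γ) ^ (1 / p)) ≤ 0 := by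
    refine (iInf₂_le (μ.map fun x => (x, x)) hc).trans ?_
    have hp0 : 0 < p := by linarith
    rw [lintegral_map (by fun_prop) (by fun_prop)]
    simp [hp0]
  rw [Wp, le_antisymm this bot_le]
  rfl

theorem phit_zero {p : ℝ} {φ : ℝ≥0 → ℝ≥0∞} (hφ : IsPenalty p φ) (t : ℝ) : phit φ t 0 = 0 := by
  simp [phit, hφ.map_zero]

theorem phi_super {p : ℝ} (hp : 1 < p) {φ : ℝ≥0 → ℝ≥0∞} (hφ : IsPenalty p φ) (K : ℝ≥0) :
    ∃ C : ℝ≥0, ∀ r : ℝ≥0, ((K * r : ℝ≥0) : ℝ≥0∞) ≤ φ r + C := by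
  have hp0 : 0 < p := by linarith
  obtain ⟨r0, hr0⟩ : ∃ r0, 0 < φ r0 := by
    obtain ⟨a, b, hab⟩ := hφ.not_const
    by_contra! h
    exact hab ((le_antisymm (h a) bot_le).trans (le_antisymm (h b) bot_le).symm)
  have hr0' : 0 < r0 := by
    rcases eq_or_lt_of_le (zero_le : (0:ℝ≥0) ≤ r0) with h | h
    · rw [← h, hφ.map_zero] at hr0; exact absurd hr0 (lt_irrefl _)
    · exact h
  obtain ⟨m, hm0, hm⟩ := ENNReal.lt_iff_exists_nnreal_btwn.1 hr0
  have hm0' : 0 < m := by exact_mod_cast hm0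
  have key : ∀ r, r0 ≤ r → ((m * (r / r0) ^ p : ℝ≥0) : ℝ≥0∞) ≤ φ r := by
    intro r hr
    have hr' : 0 < r := hr0'.trans_le hr
    have hl : (r0 / r) ^ p ≤ 1 := NNReal.rpow_le_one (div_le_one_of_le₀ hr bot_le) hp0.le
    have h := hφ.convex_rpow (r ^ p) 0 ((r0 / r) ^ p) (1 - (r0 / r) ^ p)
      (add_tsub_cancel_of_le hl)
    have hip : 1 / p ≠ 0 := by positivity
    rw [NNReal.zero_rpow hip, hφ.map_zero, mul_zero, add_zero, mul_zero, add_zero,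
      ← NNReal.mul_rpow, div_mul_cancel₀ _ hr'.ne', ← NNReal.rpow_mul, ← NNReal.rpow_mul,
      mul_one_div_cancel hp0.ne', NNReal.rpow_one, NNReal.rpow_one] at h
    have h2 := hm.le.trans h
    have e : (r / r0) ^ p * (r0 / r) ^ p = 1 := by
      rw [← NNReal.mul_rpow]
      have : r / r0 * (r0 / r) = 1 := by field_simp
      rw [this, NNReal.one_rpow]
    calc ((m * (r / r0) ^ p : ℝ≥0) : ℝ≥0∞) = ((r / r0) ^ p : ℝ≥0) * (m : ℝ≥0∞) := by
          rw [mul_comm]; push_cast; rfl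
      _ ≤ ((r / r0) ^ p : ℝ≥0) * (((r0 / r) ^ p : ℝ≥0) * φ r) := by gcongr
      _ = φ r := by rw [← mul_assoc, ← ENNReal.coe_mul, e]; simp
  set A : ℝ≥0 := (K * r0 / m) ^ (1 / (p - 1)) with hA
  refine ⟨K * (r0 * max 1 A), fun r => ?_⟩
  by_cases h : r ≤ r0 * max 1 A
  · refine le_trans ?_ le_add_self
    exact_mod_cast mul_le_mul_right h K
  · push Not at h
    have h1 : r0 ≤ r := le_trans (by simpa using mul_le_mul_right (le_max_left 1 A) r0) h.le
    refine le_trans ?_ le_self_add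
    refine le_trans ?_ (key r h1)
    rw [ENNReal.coe_le_coe]
    have h2 : A ≤ r / r0 := by
      rw [le_div_iff₀ hr0', mul_comm]
      exact le_trans (mul_le_mul_right (le_max_right 1 A) r0) h.le
    have h3 : K * r0 / m ≤ (r / r0) ^ (p - 1) := by
      have := NNReal.rpow_le_rpow h2 (by linarith : 0 ≤ p - 1)
      rwa [hA, ← NNReal.rpow_mul, one_div_mul_cancel (by linarith), NNReal.rpow_one] at this
    have hq : r / r0 ≠ 0 := (div_pos (hr0'.trans_le h1) hr0').ne'
    have h4 : (r / r0) ^ p = (r / r0) ^ (p - 1) * (r / r0) := by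
      conv_rhs => rw [← NNReal.rpow_add_one hq]
      rw [sub_add_cancel]
    calc K * r = m * ((K * r0 / m) * (r / r0)) := by field_simp
      _ ≤ m * ((r / r0) ^ (p - 1) * (r / r0)) := by gcongr
      _ = _ := by rw [h4]

theorem UCB.integrable {d : ℕ} {g : Ed d → ℝ} (hg : UCB g) (ν : Measure (Ed d))
    [IsProbabilityMeasure ν] (x : Ed d) : Integrable (fun y => g (x + y)) ν := by
  obtain ⟨⟨C, hC⟩, hu⟩ := hg
  have := hu.continuous
  refine Integrable.of_bound (by fun_prop) C (ae_of_all _ fun y => ?_)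
  exact hC _

theorem UCB.int_le {d : ℕ} {g : Ed d → ℝ} {C : ℝ} (hC : ∀ x, |g x| ≤ C) (ν : Measure (Ed d))
    [IsProbabilityMeasure ν] (x : Ed d) : |∫ y, g (x + y) ∂ν| ≤ C := by
  have := norm_integral_le_of_norm_le_const (μ := ν) (f := fun y => g (x + y)) (C := C)
    (ae_of_all _ fun y => hC _)
  simpa using this

/-- uniform modulus passes through averages -/
theorem UCB.int_diff {d : ℕ} {g : Ed d → ℝ} (hg : UCB g) {ε : ℝ} {x x' : Ed d}
    (h : ∀ y, g (x + y) ≤ g (x' + y) + ε) (ν : Measure (Ed d)) [IsProbabilityMeasure ν] :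
    ∫ y, g (x + y) ∂ν ≤ ∫ y, g (x' + y) ∂ν + ε := by
  calc ∫ y, g (x + y) ∂ν ≤ ∫ y, (g (x' + y) + ε) ∂ν :=
        integral_mono (hg.integrable ν x) ((hg.integrable ν x').add (integrable_const _)) h
    _ = _ := by rw [integral_add (hg.integrable ν x') (integrable_const _)]; simp

theorem uc_of_one_sided {d : ℕ} {g G : Ed d → ℝ} (hg : UniformContinuous g)
    (h : ∀ ε, 0 < ε → ∀ x x', (∀ y, g (x + y) ≤ g (x' + y) + ε) → G x ≤ G x' + ε) :
    UniformContinuous G := by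
  rw [Metric.uniformContinuous_iff] at hg ⊢
  intro ε hε
  obtain ⟨δ, hδ, H⟩ := hg (ε / 2) (by positivity)
  refine ⟨δ, hδ, fun {a b} hab => ?_⟩
  have key : ∀ a b : Ed d, dist a b < δ → G a ≤ G b + ε / 2 := by
    intro a b hab
    refine h _ (by positivity) a b fun y => ?_
    have := H (a := a + y) (b := b + y) (by simpa using hab)
    rw [Real.dist_eq, abs_lt] at this
    linarith
  have h1 := key a b hab
  have h2 := key b a (by rwa [dist_comm])
  rw [Real.dist_eq, abs_lt]
  constructor <;> linarith

theorem Smu_UCB {d : ℕ} {p : ℝ} {μ : ℝ → Measure (Ed d)} {t : ℝ} (hm : MemPp p (μ t))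
    {g : Ed d → ℝ} (hg : UCB g) : UCB (Smu μ t g) := by
  have := hm.1
  refine ⟨?_, uc_of_one_sided hg.2 fun ε _ x x' h => hg.int_diff h _⟩
  obtain ⟨C, hC⟩ := hg.1
  exact ⟨C, fun x => UCB.int_le hC _ x⟩

theorem Sop_bdd {d : ℕ} {p : ℝ} {φ : ℝ≥0 → ℝ≥0∞} {m : Measure (Ed d)} {t : ℝ}
    {g : Ed d → ℝ} {C : ℝ} (hC : ∀ x, |g x| ≤ C) (x : Ed d) :
    C ∈ upperBounds { r : ℝ | ∃ ν : Measure (Ed d), MemPp p ν ∧ ∃ c : ℝ, 0 ≤ c ∧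
    phit φ t (Wp p m ν).toNNReal ≤ ENNReal.ofReal c ∧ r = (∫ y, g (x + y) ∂ν) - c } := by
  rintro r ⟨ν, hν, c, hc, -, rfl⟩
  have := hν.1
  have := (abs_le.1 (UCB.int_le hC ν x)).2
  linarith

theorem Sop_mem {d : ℕ} {p : ℝ} (hp : 1 < p) {φ : ℝ≥0 → ℝ≥0∞} (hφ : IsPenalty p φ)
    {m : Measure (Ed d)} (hm : MemPp p m) (t : ℝ) (g : Ed d → ℝ) (x : Ed d) :
    (∫ y, g (x + y) ∂m) ∈ { r : ℝ | ∃ ν : Measure (Ed d), MemPp p ν ∧ ∃ c : ℝ, 0 ≤ c ∧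
    phit φ t (Wp p m ν).toNNReal ≤ ENNReal.ofReal c ∧ r = (∫ y, g (x + y) ∂ν) - c } := by
  refine ⟨m, hm, 0, le_rfl, ?_, by simp⟩
  rw [Wp_self hp, Real.toNNReal_zero, phit_zero hφ]
  exact bot_le

theorem le_Sop {d : ℕ} {p : ℝ} (hp : 1 < p) {φ : ℝ≥0 → ℝ≥0∞} (hφ : IsPenalty p φ)
    {m : Measure (Ed d)} (hm : MemPp p m) (t : ℝ) {g : Ed d → ℝ} (hg : UCB g) (x : Ed d) :
    (∫ y, g (x + y) ∂m) ≤ Sop p φ m t g x := by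
  obtain ⟨C, hC⟩ := hg.1
  exact le_csSup ⟨C, Sop_bdd hC x⟩ (Sop_mem hp hφ hm t g x)

theorem Sop_UCB {d : ℕ} {p : ℝ} (hp : 1 < p) {φ : ℝ≥0 → ℝ≥0∞} (hφ : IsPenalty p φ)
    {m : Measure (Ed d)} (hm : MemPp p m) (t : ℝ) {g : Ed d → ℝ} (hg : UCB g) :
    UCB (Sop p φ m t g) := by
  obtain ⟨C, hC⟩ := hg.1
  have := hm.1
  constructor
  · refine ⟨C, fun x => abs_le.2 ⟨?_, ?_⟩⟩
    · exact (abs_le.1 (UCB.int_le hC m x)).1.trans (le_Sop hp hφ hm t hg x)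
    · exact csSup_le ⟨_, Sop_mem hp hφ hm t g x⟩ (Sop_bdd hC x)
  · refine uc_of_one_sided hg.2 fun ε _ x x' h => ?_
    refine csSup_le ⟨_, Sop_mem hp hφ hm t g x⟩ ?_
    rintro r ⟨ν, hν, c, hc, hc', rfl⟩
    have := hν.1
    have h1 := hg.int_diff h ν
    have h2 : (∫ y, g (x' + y) ∂ν) - c ≤ Sop p φ m t g x' :=
      le_csSup ⟨C, Sop_bdd hC x'⟩ ⟨ν, hν, c, hc, hc', rfl⟩
    linarith

theorem iter_lower {d : ℕ} {p : ℝ} (hp : 1 < p) {φ : ℝ≥0 → ℝ≥0∞} (hφ : IsPenalty p φ)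
    {μ : ℝ → Measure (Ed d)} (hμ : IsConvSemigroup p μ) {f : Ed d → ℝ} (hf : UCB f)
    {s r : ℝ} (hs : 0 ≤ s) (hr : 0 ≤ r) (k : ℕ) :
    UCB ((fun g => Sop p φ (μ s) s g)^[k] (Sop p φ (μ r) r f)) ∧
    ∀ x, Smu μ (k * s + r) f x ≤ (fun g => Sop p φ (μ s) s g)^[k] (Sop p φ (μ r) r f) x := by
  induction k with
  | zero =>
    refine ⟨Sop_UCB hp hφ (hμ.2.2 r hr) r hf, fun x => ?_⟩
    simpa [Smu] using le_Sop hp hφ (hμ.2.2 r hr) r hf x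
  | succ k ih =>
    rw [Function.iterate_succ_apply']
    refine ⟨Sop_UCB hp hφ (hμ.2.2 s hs) s ih.1, fun x => ?_⟩
    refine le_trans ?_ (le_Sop hp hφ (hμ.2.2 s hs) s ih.1 x)
    have hk : 0 ≤ k * s + r := by positivity
    have m1 := hμ.2.2 s hs
    have m2 := hμ.2.2 _ hk
    have := m1.1
    have := m2.1
    have e : ((k + 1 : ℕ) : ℝ) * s + r = s + (k * s + r) := by push_cast; ring
    have hint : Integrable (fun y => f (x + y)) ((μ s).conv (μ (k * s + r))) :=
      hf.integrable _ x
    calc Smu μ ((k + 1 : ℕ) * s + r) f x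
        = ∫ y, f (x + y) ∂((μ s).conv (μ (k * s + r))) := by
          rw [Smu, e, hμ.2.1 s _ hs hk]
      _ = ∫ y, Smu μ (k * s + r) f (x + y) ∂(μ s) := by
          rw [integral_conv hint]
          simp only [Smu, add_assoc]
      _ ≤ _ := integral_mono ((Smu_UCB m2 hf).integrable _ x) (ih.1.integrable _ x)
          fun y => ih.2 (x + y)

theorem Siter_lower {d : ℕ} {p : ℝ} (hp : 1 < p) {φ : ℝ≥0 → ℝ≥0∞} (hφ : IsPenalty p φ)
    {μ : ℝ → Measure (Ed d)} (hμ : IsConvSemigroup p μ) {f : Ed d → ℝ} (hf : UCB f)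
    {t : ℝ} (ht : 0 ≤ t) (n : ℕ) (x : Ed d) : Smu μ t f x ≤ SiterN p φ μ n t f x := by
  have h2 : (0:ℝ) < 2 ^ n := by positivity
  have hr : 0 ≤ t - ⌊(2:ℝ)^n * t⌋₊ * ((2:ℝ)^n)⁻¹ := by
    have := Nat.floor_le (a := (2:ℝ)^n * t) (by positivity)
    rw [sub_nonneg, ← div_eq_mul_inv, div_le_iff₀ h2]
    linarith
  have := (iter_lower hp hφ hμ hf (inv_nonneg.2 h2.le) hr ⌊(2:ℝ)^n * t⌋₊).2 x
  rwa [add_sub_cancel] at this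

theorem C0_UCB {d : ℕ} (f : C₀(Ed d, ℝ)) : UCB (⇑f) := by
  constructor
  · refine ⟨‖f.toBCF‖, fun x => f.toBCF.norm_coe_le_norm x⟩
  · exact ZeroAtInftyContinuousMap.uniformContinuous f

theorem UCB.modulus {d : ℕ} {g : Ed d → ℝ} (hg : UCB g) {ε : ℝ} (hε : 0 < ε) :
    ∃ K : ℝ≥0, ∀ x y, |g (x + y) - g x| ≤ ε + K * ‖y‖ := by
  obtain ⟨⟨C, hC⟩, hu⟩ := hg
  obtain ⟨δ, hδ, H⟩ := Metric.uniformContinuous_iff.1 hu ε hε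
  have hC0 : 0 ≤ C := (abs_nonneg _).trans (hC 0)
  refine ⟨⟨2 * C / δ, by positivity⟩, fun x y => ?_⟩
  show |g (x + y) - g x| ≤ ε + 2 * C / δ * ‖y‖
  by_cases h : ‖y‖ < δ
  · have := H (a := x + y) (b := x) (by simpa using h)
    rw [Real.dist_eq] at this
    have : 0 ≤ 2 * C / δ * ‖y‖ := by positivity
    linarith
  · push Not at h
    have h1 := abs_sub (g (x + y)) (g x)
    have h2 := hC (x + y)
    have h3 := hC x
    have : 2 * C ≤ 2 * C / δ * ‖y‖ := by
      rw [div_mul_eq_mul_div, le_div_iff₀ hδ]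
      gcongr
    linarith

theorem avg_bound {d : ℕ} {p : ℝ} (hp : 1 < p) {g : Ed d → ℝ} (hg : UCB g) {ε : ℝ} {K : ℝ≥0}
    (hK : ∀ x y, |g (x + y) - g x| ≤ ε + K * ‖y‖) {ν : Measure (Ed d)} (hν : MemPp p ν)
    (x : Ed d) : |(∫ y, g (x + y) ∂ν) - g x| ≤ ε + K * ∫ y, ‖y‖ ∂ν := by
  have := hν.1
  have hn := norm_integrable hp hν
  calc |(∫ y, g (x + y) ∂ν) - g x| = |∫ y, (g (x + y) - g x) ∂ν| := by
        rw [integral_sub (hg.integrable ν x) (integrable_const _)]; simp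
    _ ≤ ∫ y, |g (x + y) - g x| ∂ν := abs_integral_le_integral_abs
    _ ≤ ∫ y, (ε + K * ‖y‖) ∂ν :=
        integral_mono ((hg.integrable ν x).sub (integrable_const _)).abs
          ((integrable_const _).add (hn.const_mul _)) (hK x)
    _ = _ := by
        rw [integral_add (integrable_const _) (hn.const_mul _), integral_const_mul]; simp

theorem dirac_MemPp {d : ℕ} {p : ℝ} (hp : 1 < p) : MemPp p (Measure.dirac (0 : Ed d)) := by
  refine ⟨inferInstance, ?_⟩
  have hp0 : 0 < p := by linarith
  rw [lintegral_dirac]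
  simp [hp0]

/-- strong continuity at zero, `lim_{t↓0} ‖𝒮(t)f − f‖_∞ = 0`. -/
theorem stmt_8 (d : ℕ) (hd : 1 ≤ d) (p : ℝ) (hp : 1 < p)
    (φ : ℝ≥0 → ℝ≥0∞) (hφ : IsPenalty p φ)
    (μ : ℝ → Measure (Ed d)) (hμ : IsConvSemigroup p μ) (hμ0 : WContinuousAtZero p μ)
    (f : C₀(Ed d, ℝ)) :
    TendstoUniformly (fun t x => Slim p φ μ t (⇑f) x) (⇑f) (𝓝[>] (0:ℝ)) := by
  have hf := C0_UCB f
  rw [Metric.tendstoUniformly_iff]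
  intro ε hε
  obtain ⟨K, hK⟩ := hf.modulus (ε := ε / 4) (by positivity)
  obtain ⟨C, hC⟩ := phi_super hp hφ K
  have hlim1 : Tendsto (fun t => (K:ℝ) * Wp p (μ t) (Measure.dirac 0)) (𝓝[>] (0:ℝ)) (𝓝 0) := by
    simpa using hμ0.const_mul (K:ℝ)
  have hlim2 : Tendsto (fun t : ℝ => t * (C:ℝ)) (𝓝[>] (0:ℝ)) (𝓝 0) := by
    have : Tendsto (fun t : ℝ => t * (C:ℝ)) (𝓝 (0:ℝ)) (𝓝 (0 * C)) :=
      (continuous_id.mul continuous_const).tendsto _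
    rw [zero_mul] at this
    exact this.mono_left nhdsWithin_le_nhds
  have hone : ∀ᶠ t in 𝓝[>] (0:ℝ), t < 1 :=
    nhdsWithin_le_nhds (Iio_mem_nhds one_pos)
  filter_upwards [hlim1.eventually_lt_const (show (0:ℝ) < ε / 4 by positivity),
    hlim2.eventually_lt_const (show (0:ℝ) < ε / 4 by positivity), hone, self_mem_nhdsWithin]
    with t ht1 ht2 ht3 ht0 x
  have ht0 : 0 < t := ht0
  have hmt := hμ.2.2 t ht0.le
  have hM : ∫ y, ‖y‖ ∂(μ t) ≤ Wp p (μ t) (Measure.dirac 0) := by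
    have := (Wp_bound hp hmt (dirac_MemPp hp)).2
    simpa using this
  have hKM : (K:ℝ) * ∫ y, ‖y‖ ∂(μ t) < ε / 4 :=
    (mul_le_mul_of_nonneg_left hM K.2).trans_lt ht1
  have low : f x - ε / 2 ≤ Smu μ t f x := by
    have := (abs_le.1 (avg_bound hp hf hK hmt x)).1
    rw [Smu]
    linarith
  have hlow : f x - ε / 2 ≤ Slim p φ μ t f x :=
    le_ciInf fun n => low.trans (Siter_lower hp hφ hμ hf ht0.le n x)
  have hup1 : Slim p φ μ t f x ≤ SiterN p φ μ 0 t f x :=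
    ciInf_le ⟨Smu μ t f x, by
      rintro _ ⟨n, rfl⟩
      exact Siter_lower hp hφ hμ hf ht0.le n x⟩ 0
  have hfl : ⌊t⌋₊ = 0 := Nat.floor_eq_zero.2 ht3
  have e0 : SiterN p φ μ 0 t f x = Sop p φ (μ t) t f x := by
    simp [SiterN, hfl]
  have hup2 : Sop p φ (μ t) t f x ≤ f x + 3 * ε / 4 := by
    refine csSup_le ⟨_, Sop_mem hp hφ hmt t f x⟩ ?_
    rintro r ⟨ν, hν, c, hc, hc', rfl⟩
    have h1 := (abs_le.1 (avg_bound hp hf hK hν x)).2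
    have h2 := (Wp_bound hp hmt hν).1
    have hW0 : 0 ≤ Wp p (μ t) ν := ENNReal.toReal_nonneg
    have h3 : (K:ℝ) * Wp p (μ t) ν ≤ c + t * C := by
      set W := (Wp p (μ t) ν).toNNReal with hW
      have hWr : (W : ℝ) = Wp p (μ t) ν := Real.coe_toNNReal _ hW0
      rw [← hWr]
      rw [phit, if_pos ht0] at hc'
      have ht' : 0 < t.toNNReal := Real.toNNReal_pos.2 ht0
      have h4 : ((K * W : ℝ≥0) : ℝ≥0∞) ≤ ENNReal.ofReal c + (t.toNNReal * C : ℝ≥0) := by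
        calc ((K * W : ℝ≥0) : ℝ≥0∞)
            = (t.toNNReal : ℝ≥0∞) * ((K * (W / t.toNNReal) : ℝ≥0) : ℝ≥0∞) := by
              rw [← ENNReal.coe_mul]; congr 1; field_simp
          _ ≤ (t.toNNReal : ℝ≥0∞) * (φ (W / t.toNNReal) + C) := by gcongr; exact hC _
          _ = (t.toNNReal : ℝ≥0∞) * φ (W / t.toNNReal) + (t.toNNReal * C : ℝ≥0) := by
              rw [mul_add]; push_cast; rfl
          _ ≤ _ := by gcongr
      rw [ENNReal.ofReal, ← ENNReal.coe_add, ENNReal.coe_le_coe] at h4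
      have h5 := NNReal.coe_le_coe.2 h4
      push_cast at h5
      rwa [Real.coe_toNNReal _ hc, Real.coe_toNNReal _ ht0.le] at h5
    have h6 := mul_le_mul_of_nonneg_left h2 K.2
    have h7 : (K:ℝ) * ∫ y, ‖y‖ ∂ν ≤ K * Wp p (μ t) ν + K * ∫ y, ‖y‖ ∂(μ t) := by
      rw [← mul_add]; exact h6
    linarith
  rw [Real.dist_eq, abs_lt]
  constructor <;> linarith
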